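/- Let k be a field, let V be a k-vector space of countably infinite dimension, and let R = k ⊕ V be the trivial extension algebra (V·V = 0, V an ideal). Then the R-module k^{(ℕ)} (a countable direct sum of copies of the one-dimensional R-module k on which V acts by zero) fits into a short exact sequence 0 → k^{(ℕ)} → R^{(ℕ)} → k^{(ℕ)} → 0 with R^{(ℕ)} a free R-module, so it is Proj-periodic, but k^{(ℕ)} is not an fp-projective R-module. -/

import Mathlib

/-!
STATEMENT 17: Let k be a field, V a k-vector space of countably infinite
dimension (we take V = ℕ →₀ k), and R = k ⊕ V the trivial extension algebra.
Then the R-module k^{(ℕ)} = ℕ →₀ k (with V acting by zero) fits into a short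
exact sequence 0 → k^{(ℕ)} → R^{(ℕ)} → k^{(ℕ)} → 0 with R^{(ℕ)} free, so it
is Proj-periodic, but k^{(ℕ)} is not fp-projective.
-/

open CategoryTheory Limits

universe u

namespace Stmt17

variable (k : Type u) [Field k]

/-- The trivial extension algebra `R = k ⊕ V`, `V = ℕ →₀ k`. -/
abbrev R := TrivSqZeroExt k (ℕ →₀ k)

/-- The module `k^{(ℕ)}`, on which `V` acts by zero: the `R`-module structure
is restricted along the projection `R → k`. -/
noncomputable instance : Module (R k) (ℕ →₀ k) :=
  Module.compHom _ (TrivSqZeroExt.fstHom k k (ℕ →₀ k)).toRingHom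

instance : HasExt.{u + 1} (ModuleCat.{u} (R k)) := by
  letI := HasDerivedCategory.standard (ModuleCat.{u} (R k))
  exact hasExt_of_hasDerivedCategory _

/-- An `R`-module `J` is fp-injective if `Ext¹(T, J) = 0` for every finitely
presented `R`-module `T`. -/
def FpInjective (J : ModuleCat.{u} (R k)) : Prop :=
  ∀ T : ModuleCat.{u} (R k), Module.FinitePresentation (R k) T →
    Subsingleton (Abelian.Ext T J 1)

/-- An `R`-module `P` is fp-projective if `Ext¹(P, J) = 0` for every
fp-injective `R`-module `J`. -/
def FpProjective (P : ModuleCat.{u} (R k)) : Prop :=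
  ∀ J : ModuleCat.{u} (R k), FpInjective k J → Subsingleton (Abelian.Ext P J 1)

section General

universe v w

variable {A : Type v} [Ring A]

/-- If `Ext¹(X₃, J) = 0`, maps `X₁ → J` extend along `X₁ → X₂`. -/
lemma exists_extension_of_ext [HasExt.{w} (ModuleCat.{v} A)]
    {S : ShortComplex (ModuleCat.{v} A)} (hS : S.ShortExact) (J : ModuleCat.{v} A)
    (h : Subsingleton (Abelian.Ext.{w} S.X₃ J 1)) (φ : S.X₁ ⟶ J) :
    ∃ ψ : S.X₂ ⟶ J, S.f ≫ ψ = φ := by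
  obtain ⟨x, hx⟩ := Abelian.Ext.contravariant_sequence_exact₁ hS J (Abelian.Ext.mk₀ φ)
    (n₁ := 1) rfl (Subsingleton.elim _ _)
  obtain ⟨ψ, rfl⟩ := (Abelian.Ext.mk₀_bijective _ _).2 x
  rw [Abelian.Ext.mk₀_comp_mk₀] at hx
  exact ⟨ψ, (Abelian.Ext.mk₀_bijective _ _).1 hx⟩

/-- Conversely when `X₂` is projective. -/
lemma ext_subsingleton_of_extension [HasExt.{w} (ModuleCat.{v} A)]
    {S : ShortComplex (ModuleCat.{v} A)} (hS : S.ShortExact) (J : ModuleCat.{v} A)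
    [Projective S.X₂] (h : ∀ φ : S.X₁ ⟶ J, ∃ ψ : S.X₂ ⟶ J, S.f ≫ ψ = φ) :
    Subsingleton (Abelian.Ext.{w} S.X₃ J 1) := by
  refine subsingleton_of_forall_eq 0 fun x => ?_
  obtain ⟨y, rfl⟩ := Abelian.Ext.contravariant_sequence_exact₃ hS J x
    (Abelian.Ext.eq_zero_of_projective _) (n₀ := 0) rfl
  obtain ⟨φ, rfl⟩ := (Abelian.Ext.mk₀_bijective _ _).2 y
  obtain ⟨ψ, rfl⟩ := h φ
  rw [← Abelian.Ext.mk₀_comp_mk₀, ShortComplex.ShortExact.extClass_comp_assoc]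

/-- Maps from a f.g. submodule into a direct sum of injectives extend. -/
lemma extend_to_finsupp {P E : Type v} [AddCommGroup P] [Module A P] [AddCommGroup E] [Module A E]
    [Module.Injective A E] (K : Submodule A P) (hK : K.FG) (φ : K →ₗ[A] (ℕ →₀ E)) :
    ∃ ψ : P →ₗ[A] (ℕ →₀ E), ∀ x : K, ψ x = φ x := by
  classical
  have hext : ∀ i : ℕ, ∃ ψ : P →ₗ[A] E, ∀ x : K, ψ x = φ x i := fun i =>
    Module.Injective.out K.subtype K.injective_subtype (Finsupp.lapply i ∘ₗ φ)
  choose ψ hψ using hext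
  have hfin : ∃ S : Finset ℕ, ∀ x : K, φ x ∈ Finsupp.supported E A (S : Set ℕ) := by
    haveI : Module.Finite A K := Module.Finite.iff_fg.mpr hK
    obtain ⟨s, hs⟩ := Module.Finite.fg_top (R := A) (M := K)
    refine ⟨s.biUnion fun x => (φ x).support, fun x => ?_⟩
    have : (⊤ : Submodule A K) ≤ (Finsupp.supported E A
        ((s.biUnion fun x => (φ x).support : Finset ℕ) : Set ℕ)).comap φ := by
      rw [← hs, Submodule.span_le]
      intro y hy
      simp only [Submodule.comap_coe, Set.mem_preimage, SetLike.mem_coe, Finsupp.mem_supported]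
      exact_mod_cast Finset.subset_biUnion_of_mem (fun x => (φ x).support) hy
    exact this trivial
  obtain ⟨S, hS⟩ := hfin
  refine ⟨∑ i ∈ S, Finsupp.lsingle i ∘ₗ ψ i, fun x => ?_⟩
  ext j
  simp only [LinearMap.sum_apply, LinearMap.comp_apply, Finsupp.lsingle_apply, hψ,
    Finsupp.finsetSum_apply, Finsupp.single_apply, Finset.sum_ite_eq']
  split_ifs with hj
  · rfl
  · have := (Finsupp.mem_supported _ _).1 (hS x)
    by_contra hne
    exact hj (this (Finsupp.mem_support_iff.2 (Ne.symm hne)))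

end General

lemma fpInjective_finsupp (E : Type u) [AddCommGroup E] [Module (R k) E]
    [Module.Injective (R k) E] : FpInjective k (ModuleCat.of (R k) (ℕ →₀ E)) := by
  intro T hT
  obtain ⟨n, K, e, hK⟩ := Module.FinitePresentation.exists_fin (R k) T
  let g : (Fin n → R k) →ₗ[R k] T := e.symm.toLinearMap ∘ₗ K.mkQ
  have hg : ∀ x, g x = 0 ↔ x ∈ K := fun x => by
    simp [g]
  let S : ShortComplex (ModuleCat.{u} (R k)) :=
    ShortComplex.mk (X₁ := ModuleCat.of (R k) K) (X₂ := ModuleCat.of (R k) (Fin n → R k)) (X₃ := T)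
      (ModuleCat.ofHom K.subtype) (ModuleCat.ofHom g) (by
        ext x
        exact (hg _).2 x.2)
  have hS : S.ShortExact := by
    refine ModuleCat.shortComplex_shortExact S ?_ ?_ ?_
    · intro x
      constructor
      · intro hx
        exact ⟨⟨x, (hg x).1 hx⟩, rfl⟩
      · rintro ⟨y, rfl⟩
        exact (hg _).2 y.2
    · exact K.injective_subtype
    · exact e.symm.surjective.comp K.mkQ_surjective
  haveI : Projective S.X₂ := by
    change Projective (ModuleCat.of (R k) (Fin n → R k))
    infer_instance
  refine ext_subsingleton_of_extension hS _ fun φ => ?_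
  obtain ⟨ψ, hψ⟩ := extend_to_finsupp K hK φ.hom
  refine ⟨ModuleCat.ofHom ψ, ?_⟩
  ext1
  exact LinearMap.ext hψ

lemma smul_finsupp_def (r : R k) (m : ℕ →₀ k) : r • m = r.fst • m := rfl

/-- `V → R` inclusion. -/
noncomputable def inrL : (ℕ →₀ k) →ₗ[R k] R k where
  toFun := TrivSqZeroExt.inr
  map_add' := TrivSqZeroExt.inr_add k
  map_smul' r m := by
    rw [smul_finsupp_def]
    ext <;> simp

/-- Split `k^{(ℕ)}` as countably many copies of itself. -/
noncomputable def splitL : (ℕ →₀ k) →ₗ[R k] (ℕ →₀ (ℕ →₀ k)) where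
  toFun m := (Finsupp.equivMapDomain Nat.pairEquiv.symm m).curry
  map_add' a b := by
    ext i j
    simp [Finsupp.curry_apply]
  map_smul' r m := by
    ext i j
    simp [Finsupp.curry_apply, smul_finsupp_def]

lemma splitL_apply (m : ℕ →₀ k) (i j : ℕ) : splitL k m i j = m (Nat.pair i j) := by
  simp [splitL, Finsupp.curry_apply]

noncomputable def fMap : (ℕ →₀ k) →ₗ[R k] (ℕ →₀ R k) :=
  Finsupp.mapRange.linearMap (inrL k) ∘ₗ splitL k

lemma fMap_apply (m : ℕ →₀ k) (i : ℕ) : fMap k m i = TrivSqZeroExt.inr (splitL k m i) := rfl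

noncomputable def gMap : (ℕ →₀ R k) →ₗ[R k] (ℕ →₀ k) where
  toFun x := x.mapRange TrivSqZeroExt.fst rfl
  map_add' a b := by
    ext i
    change ((a + b) i).fst = (a i).fst + (b i).fst
    simp
  map_smul' r m := by
    ext i
    change ((r • m) i).fst = r.fst * (m i).fst
    simp

lemma gMap_apply (x : ℕ →₀ R k) (i : ℕ) : gMap k x i = (x i).fst := rfl

lemma fMap_injective : Function.Injective (fMap k) := by
  intro a b h
  ext n
  have := DFunLike.congr_fun h n.unpair.1
  rw [fMap_apply, fMap_apply] at this
  have := DFunLike.congr_fun (TrivSqZeroExt.inr_injective this) n.unpair.2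
  simpa [splitL_apply] using this

lemma gMap_surjective : Function.Surjective (gMap k) := by
  intro m
  refine ⟨m.mapRange TrivSqZeroExt.inl rfl, ?_⟩
  ext i
  rfl

lemma fg_exact (x : ℕ →₀ R k) : gMap k x = 0 ↔ ∃ m, fMap k m = x := by
  constructor
  · intro h
    let y : ℕ →₀ (ℕ →₀ k) := x.mapRange TrivSqZeroExt.snd rfl
    refine ⟨Finsupp.equivMapDomain Nat.pairEquiv y.uncurry, ?_⟩
    ext1 i
    have h1 : (x i).fst = 0 := DFunLike.congr_fun h i
    rw [fMap_apply]
    ext j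
    · simp [h1]
    · simp only [TrivSqZeroExt.snd_inr, splitL_apply]
      have : y i j = (x i).snd j := rfl
      simpa using this
  · rintro ⟨m, rfl⟩
    ext i
    simp [gMap_apply, fMap_apply]

lemma range_eq_ker : LinearMap.range (fMap k) = LinearMap.ker (gMap k) := by
  ext x
  simp [fg_exact]

/-- Projection onto the `n`-th summand. -/
noncomputable def projL (n : ℕ) : (ℕ →₀ k) →ₗ[R k] (ℕ →₀ k) where
  toFun m := Finsupp.single n (m n)
  map_add' a b := by simp
  map_smul' r m := by simp [smul_finsupp_def]

/-- The diagonal-type map to a direct sum. -/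
noncomputable def diagL {E : Type u} [AddCommGroup E] [Module (R k) E]
    (ι : (ℕ →₀ k) →ₗ[R k] E) : (ℕ →₀ k) →ₗ[R k] (ℕ →₀ E) where
  toFun m := Finsupp.onFinset m.support (fun n => ι (projL k n m)) (by
    intro n hn
    rw [Finsupp.mem_support_iff]
    rintro h
    apply hn
    simp [projL, h])
  map_add' a b := by ext; simp
  map_smul' r m := by ext; simp

lemma not_fpProjective : ¬ FpProjective k (ModuleCat.of (R k) (ℕ →₀ k)) := by
  intro h
  let E := Injective.under (ModuleCat.of (R k) (ℕ →₀ k))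
  let ι := (Injective.ι (ModuleCat.of (R k) (ℕ →₀ k))).hom
  have hι : Function.Injective ι := (ModuleCat.mono_iff_injective _).1 inferInstance
  haveI : Module.Injective (R k) E := 
    Module.injective_module_of_injective_object (R k) E (inj :=
      (inferInstanceAs (Injective (Injective.under (ModuleCat.of (R k) (ℕ →₀ k))))))
  have hE := h _ (fpInjective_finsupp k E)
  let S : ShortComplex (ModuleCat.{u} (R k)) :=
    ShortComplex.mk (X₁ := ModuleCat.of (R k) (ℕ →₀ k)) (X₂ := ModuleCat.of (R k) (ℕ →₀ R k))
      (X₃ := ModuleCat.of (R k) (ℕ →₀ k)) (ModuleCat.ofHom (fMap k)) (ModuleCat.ofHom (gMap k)) (by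
        ext1
        exact LinearMap.ext fun x => (fg_exact k _).2 ⟨x, rfl⟩)
  have hS : S.ShortExact :=
    ModuleCat.shortComplex_shortExact S (fg_exact k) (fMap_injective k) (gMap_surjective k)
  obtain ⟨ψ, hψ⟩ := exists_extension_of_ext hS _ hE (ModuleCat.ofHom (diagL k ι))
  let ψ' : (ℕ →₀ R k) →ₗ[R k] (ℕ →₀ E) := ψ.hom
  have key : ∀ m, ψ' (fMap k m) = diagL k ι m := fun m =>
    LinearMap.congr_fun (congrArg ModuleCat.Hom.hom hψ) m
  let z := ψ' (Finsupp.single 0 1)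
  have hz : ∀ j : ℕ, Nat.pair 0 j ∈ z.support := by
    intro j
    rw [Finsupp.mem_support_iff]
    intro h0
    have h1 : fMap k (Finsupp.single (Nat.pair 0 j) 1) =
        (TrivSqZeroExt.inr (Finsupp.single j 1) : R k) • Finsupp.single 0 1 := by
      ext1 i
      rw [fMap_apply, Finsupp.smul_single, smul_eq_mul, mul_one]
      have h2 : splitL k (Finsupp.single (Nat.pair 0 j) 1) i =
          if 0 = i then Finsupp.single j 1 else 0 := by
        ext l
        rw [splitL_apply]
        by_cases hi : 0 = i
        · subst hi
          simp [Finsupp.single_apply, Nat.pair_eq_pair]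
        · simp [Finsupp.single_apply, Nat.pair_eq_pair, hi]
      rw [h2, Finsupp.single_apply]
      split_ifs <;> simp
    have h3 := key (Finsupp.single (Nat.pair 0 j) 1)
    rw [h1, map_smul] at h3
    have h4 := DFunLike.congr_fun h3 (Nat.pair 0 j)
    rw [Finsupp.smul_apply] at h4
    change _ • z _ = ι (projL k _ _) at h4
    rw [h0, smul_zero] at h4
    have h5 := hι (h4.symm.trans (map_zero ι).symm)
    have h6 := DFunLike.congr_fun h5 (Nat.pair 0 j)
    simp [projL] at h6
  have hinj : Function.Injective (fun j => Nat.pair 0 j) := fun a b hab =>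
    (Nat.pair_eq_pair.1 hab).2
  exact Set.infinite_of_injective_forall_mem hinj hz z.support.finite_toSet

/-- `k^{(ℕ)}` is `Proj`-periodic: it fits in a short exact sequence
`0 → k^{(ℕ)} → R^{(ℕ)} → k^{(ℕ)} → 0` with `R^{(ℕ)}` free; but `k^{(ℕ)}` is
not fp-projective. -/
theorem trivial_extension_periodic_not_fpProjective :
    (∃ (f : (ℕ →₀ k) →ₗ[R k] (ℕ →₀ R k)) (g : (ℕ →₀ R k) →ₗ[R k] (ℕ →₀ k)),
      Function.Injective f ∧ Function.Surjective g ∧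
        LinearMap.range f = LinearMap.ker g) ∧
    ¬ FpProjective k (ModuleCat.of (R k) (ℕ →₀ k)) := by
  exact ⟨⟨fMap k, gMap k, fMap_injective k, gMap_surjective k, range_eq_ker k⟩,
    not_fpProjective k⟩

end Stmt17
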